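/- Let n ≥ 1 and λ ∈ ℂ with |λ| > 1. There is no function g : EuclideanSpace ℂ (Fin n) → ℝ that is differentiable at every point z ≠ 0, satisfies g(λ • z) = g(z) for every z ≠ 0, and satisfies fderiv ℝ g z = fderiv ℝ (fun w => Real.log ‖w‖) z for every z ≠ 0. (Hence the Lee form θ = −d log ‖z‖ of the classical Hopf manifold is not exact: it admits no primitive invariant under the deck group, so the Hopf manifold is strictly LCK and its elliptic curves are not induced globally conformally Kähler.) -/

import Mathlib

/-!
Since `ℂⁿ ∖ {0}` is connected, any primitive of `d log ‖z‖` on it is `log ‖z‖ + c`. Such a function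
takes different values at points of different norms, such as `z` and `λ • z` with `|λ| ≠ 1`.
-/

section RealInnerProductSpace

variable {E : Type*} [NormedAddCommGroup E] [InnerProductSpace ℝ E]

theorem differentiableOn_log_norm : DifferentiableOn ℝ (fun z : E => Real.log ‖z‖) {0}ᶜ :=
  (differentiableOn_id.norm ℝ fun _ hz => hz).log fun _ hz => norm_ne_zero_iff.mpr hz

variable {g : E → ℝ}

theorem exists_eqOn_log_norm_add_const_of_fderiv_eq (hE : 1 < Module.rank ℝ E)
    (hg : DifferentiableOn ℝ g {0}ᶜ)
    (hg' : Set.EqOn (fderiv ℝ g) (fderiv ℝ fun z => Real.log ‖z‖) {0}ᶜ) :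
    ∃ c, Set.EqOn g (fun z => Real.log ‖z‖ + c) {0}ᶜ :=
  isOpen_compl_singleton.exists_eq_add_of_fderiv_eq
    (isConnected_compl_singleton_of_one_lt_rank hE 0).isPreconnected
    hg differentiableOn_log_norm hg'

theorem norm_eq_norm_of_fderiv_eq_fderiv_log_norm (hE : 1 < Module.rank ℝ E)
    (hg : DifferentiableOn ℝ g {0}ᶜ)
    (hg' : Set.EqOn (fderiv ℝ g) (fderiv ℝ fun z => Real.log ‖z‖) {0}ᶜ)
    {x y : E} (hx : x ≠ 0) (hy : y ≠ 0) (hxy : g x = g y) : ‖x‖ = ‖y‖ := by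
  obtain ⟨c, hc⟩ := exists_eqOn_log_norm_add_const_of_fderiv_eq hE hg hg'
  have hlog : Real.log ‖x‖ + c = Real.log ‖y‖ + c := (hc hx).symm.trans (hxy.trans (hc hy))
  exact Real.log_injOn_pos (norm_pos_iff.mpr hx) (norm_pos_iff.mpr hy) (add_right_cancel hlog)

end RealInnerProductSpace

theorem one_lt_rank_real_of_complex (E : Type*) [AddCommGroup E] [Module ℂ E] [Nontrivial E] :
    1 < Module.rank ℝ E := by
  have hE : 1 ≤ Module.rank ℂ E := Cardinal.one_le_iff_pos.mpr rank_pos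
  calc (1 : Cardinal) < 2 * 1 := by norm_num
    _ ≤ 2 * Module.rank ℂ E := by gcongr
    _ = Module.rank ℝ E := (rank_real_of_complex E).symm

theorem hopf_lee_form_not_exact_general {E : Type*} [NormedAddCommGroup E]
    [InnerProductSpace ℂ E] [Nontrivial E] {lam : ℂ} (hlam₀ : lam ≠ 0) (hlam₁ : ‖lam‖ ≠ 1) :
    ¬ ∃ g : E → ℝ,
        (∀ z : E, z ≠ 0 → DifferentiableAt ℝ g z) ∧
        (∀ z : E, z ≠ 0 → g (lam • z) = g z) ∧
        (∀ z : E, z ≠ 0 → fderiv ℝ g z = fderiv ℝ (fun w : E => Real.log ‖w‖) z) := by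
  rintro ⟨g, hg, hinv, hg'⟩
  let : InnerProductSpace ℝ E := InnerProductSpace.complexToReal
  obtain ⟨v, hv⟩ := exists_ne (0 : E)
  have hnorm : ‖lam • v‖ = ‖v‖ :=
    norm_eq_norm_of_fderiv_eq_fderiv_log_norm (one_lt_rank_real_of_complex E)
      (fun z hz => (hg z hz).differentiableWithinAt) hg' (smul_ne_zero hlam₀ hv) hv (hinv v hv)
  rw [norm_smul, mul_eq_right₀ (norm_ne_zero_iff.mpr hv)] at hnorm
  exact hlam₁ hnorm

/-- The Lee form `θ = −d log ‖z‖` of the classical Hopf manifold `(ℂⁿ ∖ 0)/⟨λ⟩`, `|λ| > 1`,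
is not exact: there is no primitive of `d log ‖z‖` on `ℂⁿ ∖ {0}` invariant under the deck
transformation `z ↦ λ • z`. Hence the Hopf manifold is strictly LCK and its elliptic curves
are not induced globally conformally Kähler. -/
theorem hopf_lee_form_not_exact (n : ℕ) (hn : 1 ≤ n) (lam : ℂ) (hlam : 1 < ‖lam‖) :
    ¬ ∃ g : EuclideanSpace ℂ (Fin n) → ℝ,
        (∀ z : EuclideanSpace ℂ (Fin n), z ≠ 0 → DifferentiableAt ℝ g z) ∧
        (∀ z : EuclideanSpace ℂ (Fin n), z ≠ 0 → g (lam • z) = g z) ∧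
        (∀ z : EuclideanSpace ℂ (Fin n), z ≠ 0 →
          fderiv ℝ g z = fderiv ℝ (fun w : EuclideanSpace ℂ (Fin n) => Real.log ‖w‖) z) := by
  have : NeZero n := ⟨Nat.one_le_iff_ne_zero.mp hn⟩
  exact hopf_lee_form_not_exact_general (norm_pos_iff.mp (one_pos.trans hlam)) hlam.ne'
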